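/- Let p be an odd prime, let C be either the split Cartan subgroup C_sp or the non-split Cartan subgroup C_ns of GL₂(ℤ_p), and let G be either C or C⁺. Then for every n ≥ 1 one has 𝔤ₙ = V₁ ⊕ V₂, where V₁ and V₂ are taken in the split case if C = C_sp and in the non-split case if C = C_ns. -/

import Mathlib

/-!
In each case `C ⊆ S ⊆ C⁺`, and `𝔤ₙ` is monotone in the group, so it suffices to show that `V₁ ⊕ V₂`
is contained in `𝔤ₙ` for `C`, and that `𝔤ₙ` for `C⁺` is contained in `V₁ ⊕ V₂`.

For the first inclusion, an element `x·Id + y·J` of `V₁ ⊕ V₂` is lifted entrywise to a matrix `B` of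
Cartan shape over `ℤ_p`; then `1 + pⁿB` has Cartan shape too, and it is invertible because its
determinant is `1` modulo `p` (`exists_gl_eq_one_add`).

For the second, `C⁺` is closed under products and inverses, hence is the subgroup it generates. Its
non-trivial coset contains no matrix congruent to `1` modulo the odd prime `p`, so `1 + pⁿB ∈ C⁺`
lies in `C`; the linear equations defining `C` can be divided by `pⁿ`, and `B` modulo `p` lies in
`V₁ ⊕ V₂`.
-/


open Matrix

noncomputable section

variable (p : ℕ) [Fact p.Prime]

/-- Reduction `GL₂(ℤ_p) → GL₂(ℤ/pⁿℤ)` of the matrix entries modulo `pⁿ`;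
`G(pⁿ)` is the image of `G` under this map. -/
def redPow (n : ℕ) : GL (Fin 2) ℤ_[p] →* GL (Fin 2) (ZMod (p ^ n)) :=
  Matrix.GeneralLinearGroup.map (PadicInt.toZModPow n)

/-- Reduction `GL₂(ℤ_p) → GL₂(𝔽_p)` of the matrix entries modulo `p`;
`G(p)` is the image of `G` under this map. -/
def red : GL (Fin 2) ℤ_[p] →* GL (Fin 2) (ZMod p) :=
  Matrix.GeneralLinearGroup.map (PadicInt.toZMod)

/-- The least positive integer representing a quadratic non-residue modulo `p`. -/
def epsN : ℕ := sInf {n : ℕ | 0 < n ∧ ¬ IsSquare ((n : ZMod p))}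

/-- The (carrier set of the) split Cartan subgroup of `GL₂(R)`:
invertible diagonal matrices. -/
def cspSet (R : Type*) [CommRing R] : Set (GL (Fin 2) R) :=
  {A | ∃ a b : R, (A : Matrix (Fin 2) (Fin 2) R) = !![a, 0; 0, b]}

/-- The (carrier set of the) normaliser `C_sp⁺ = C_sp ∪ [[0,1],[1,0]]·C_sp`. -/
def cspPlusSet (R : Type*) [CommRing R] : Set (GL (Fin 2) R) :=
  {A | ∃ a b : R, (A : Matrix (Fin 2) (Fin 2) R) = !![a, 0; 0, b] ∨
    (A : Matrix (Fin 2) (Fin 2) R) = !![0, 1; 1, 0] * !![a, 0; 0, b]}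

/-- The (carrier set of the) non-split Cartan subgroup of `GL₂(R)`:
invertible matrices of the shape `[[a, εb], [b, a]]`.  (Over `ℤ_p`, resp. `ℤ/pⁿℤ`,
invertibility forces `(a, b) ≢ (0, 0) mod p`.) -/
def cnsSet (R : Type*) [CommRing R] (ε : R) : Set (GL (Fin 2) R) :=
  {A | ∃ a b : R, (A : Matrix (Fin 2) (Fin 2) R) = !![a, ε * b; b, a]}

/-- The (carrier set of the) normaliser `C_ns⁺ = C_ns ∪ [[1,0],[0,-1]]·C_ns`. -/
def cnsPlusSet (R : Type*) [CommRing R] (ε : R) : Set (GL (Fin 2) R) :=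
  {A | ∃ a b : R, (A : Matrix (Fin 2) (Fin 2) R) = !![a, ε * b; b, a] ∨
    (A : Matrix (Fin 2) (Fin 2) R) = !![(1 : R), 0; 0, -1] * !![a, ε * b; b, a]}

/-- `G ≤ GL₂(ℤ_p)` is an *N-Cartan lift* with respect to the Cartan subgroup with
carrier set `C` (with normaliser carrier set `Cplus`): `G` is closed,
`det G = ℤ_p^×`, the reduction `G(p)` is contained in `C⁺(p)` but not in `C(p)`, and
`G(p)` contains an element of `C(p)` which is not a scalar multiple of the identity. -/
def IsNCartanLift (G : Subgroup (GL (Fin 2) ℤ_[p]))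
    (C Cplus : Set (GL (Fin 2) ℤ_[p])) : Prop :=
  IsClosed (G : Set (GL (Fin 2) ℤ_[p])) ∧
  (∀ u : ℤ_[p]ˣ, ∃ A ∈ G, Matrix.GeneralLinearGroup.det A = u) ∧
  (⇑(red p) '' ↑G ⊆ ⇑(red p) '' Cplus) ∧
  ¬ (⇑(red p) '' ↑G ⊆ ⇑(red p) '' C) ∧
  (∃ g ∈ (⇑(red p) '' ↑G) ∩ (⇑(red p) '' C),
    ¬ ∃ c : ZMod p,
      (g : Matrix (Fin 2) (Fin 2) (ZMod p)) = c • (1 : Matrix (Fin 2) (Fin 2) (ZMod p)))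

/-- The image `𝔤ₙ` of `Gₙ/Gₙ₊₁` inside `gl₂(𝔽_p)` under `I + pⁿB ↦ (B mod p)`:
the set of reductions mod `p` of matrices `B` with `I + pⁿB ∈ G`. -/
def glSet (n : ℕ) (G : Subgroup (GL (Fin 2) ℤ_[p])) :
    Set (Matrix (Fin 2) (Fin 2) (ZMod p)) :=
  {M | ∃ A ∈ G, ∃ B : Matrix (Fin 2) (Fin 2) ℤ_[p],
    (A : Matrix (Fin 2) (Fin 2) ℤ_[p]) = 1 + ((p : ℤ_[p]) ^ n) • B ∧
    B.map ⇑(PadicInt.toZMod (p := p)) = M}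

/-- The dimension of `𝔤ₙ` as an `𝔽_p`-vector space (recall that `𝔤ₙ` is an
`𝔽_p`-subspace of `gl₂(𝔽_p)`, so it coincides with its span). -/
def glDim (n : ℕ) (G : Subgroup (GL (Fin 2) ℤ_[p])) : ℕ :=
  Module.finrank (ZMod p) (Submodule.span (ZMod p) (glSet p n G))

/-- `V₁ = 𝔽_p · Id`. -/
def V1 : Submodule (ZMod p) (Matrix (Fin 2) (Fin 2) (ZMod p)) :=
  Submodule.span (ZMod p) {(1 : Matrix (Fin 2) (Fin 2) (ZMod p))}

/-- Non-split case: `V₂ = 𝔽_p · [[0, ε], [1, 0]]`. -/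
def V2ns : Submodule (ZMod p) (Matrix (Fin 2) (Fin 2) (ZMod p)) :=
  Submodule.span (ZMod p) {!![0, (epsN p : ZMod p); 1, 0]}

/-- Non-split case: `V₃ = 𝔽_p · [[1,0],[0,-1]] ⊕ 𝔽_p · [[0,ε],[-1,0]]`. -/
def V3ns : Submodule (ZMod p) (Matrix (Fin 2) (Fin 2) (ZMod p)) :=
  Submodule.span (ZMod p) {!![1, 0; 0, -1], !![0, (epsN p : ZMod p); -1, 0]}

/-- Split case: `V₂ = 𝔽_p · [[1,0],[0,-1]]`. -/
def V2sp : Submodule (ZMod p) (Matrix (Fin 2) (Fin 2) (ZMod p)) :=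
  Submodule.span (ZMod p) {!![1, 0; 0, -1]}

/-- Split case: `V₃ = 𝔽_p · [[0,1],[1,0]] ⊕ 𝔽_p · [[0,1],[-1,0]]`. -/
def V3sp : Submodule (ZMod p) (Matrix (Fin 2) (Fin 2) (ZMod p)) :=
  Submodule.span (ZMod p) {!![0, 1; 1, 0], !![0, 1; -1, 0]}

/-- There is an element of `G(p) ∩ C(p)` whose image in `PGL₂(𝔽_p)` has order
greater than `2`. -/
def HasLargeOrderElt (G : Subgroup (GL (Fin 2) ℤ_[p]))
    (C : Set (GL (Fin 2) ℤ_[p])) : Prop :=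
  ∃ g ∈ (⇑(red p) '' ↑G) ∩ (⇑(red p) '' C),
    2 < orderOf (QuotientGroup.mk g :
      GL (Fin 2) (ZMod p) ⧸ Subgroup.center (GL (Fin 2) (ZMod p)))

/-- `1 + pⁿB` is invertible for `n ≥ 1`, since its determinant is `1` modulo `p`. -/
lemma exists_gl_eq_one_add {n : ℕ} (hn : 1 ≤ n) (B : Matrix (Fin 2) (Fin 2) ℤ_[p]) :
    ∃ A : GL (Fin 2) ℤ_[p],
      (A : Matrix (Fin 2) (Fin 2) ℤ_[p]) = 1 + ((p : ℤ_[p]) ^ n) • B := by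
  have hdet : PadicInt.toZMod (1 + ((p : ℤ_[p]) ^ n) • B).det = 1 := by
    have hp0 : PadicInt.toZMod ((p : ℤ_[p]) ^ n) = 0 := by
      rw [map_pow, map_natCast, ZMod.natCast_self, zero_pow (by omega)]
    rw [Matrix.det_fin_two]
    simp [hp0, Matrix.one_apply]
  have hu : IsUnit (1 + ((p : ℤ_[p]) ^ n) • B).det := by
    by_contra h
    have hm : (1 + ((p : ℤ_[p]) ^ n) • B).det ∈ IsLocalRing.maximalIdeal ℤ_[p] := h
    rw [← PadicInt.ker_toZMod, RingHom.mem_ker, hdet] at hm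
    exact one_ne_zero hm
  exact ⟨((Matrix.isUnit_iff_isUnit_det _).2 hu).unit, rfl⟩

lemma glSet_mono {n : ℕ} {G H : Subgroup (GL (Fin 2) ℤ_[p])} (h : G ≤ H) :
    glSet p n G ⊆ glSet p n H := by
  rintro M ⟨A, hA, B, hAB, hB⟩
  exact ⟨A, h hA, B, hAB, hB⟩

lemma mem_sup_span_iff {J M : Matrix (Fin 2) (Fin 2) (ZMod p)} :
    M ∈ V1 p ⊔ Submodule.span (ZMod p) {J} ↔
      ∃ x y : ZMod p, M = x • (1 : Matrix (Fin 2) (Fin 2) (ZMod p)) + y • J := by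
  simp only [V1, Submodule.mem_sup, Submodule.mem_span_singleton]
  constructor
  · rintro ⟨_, ⟨x, rfl⟩, _, ⟨y, rfl⟩, rfl⟩
    exact ⟨x, y, rfl⟩
  · rintro ⟨x, y, rfl⟩
    exact ⟨_, ⟨x, rfl⟩, _, ⟨y, rfl⟩, rfl⟩

/-- `C_sp⁺` is closed under products and inverses. -/
lemma closure_cspPlusSet_subset {R : Type*} [CommRing R] {A : GL (Fin 2) R}
    (hA : A ∈ Subgroup.closure (cspPlusSet R)) : A ∈ cspPlusSet R := by
  induction hA using Subgroup.closure_induction with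
  | mem x hx => exact hx
  | one => exact ⟨1, 1, Or.inl (by simp [Matrix.one_fin_two])⟩
  | mul x y _ _ hx hy =>
    obtain ⟨a, b, h⟩ := hx
    obtain ⟨c, d, k⟩ := hy
    rcases h with h | h <;> rcases k with k | k
    · exact ⟨a * c, b * d, Or.inl (by rw [Units.val_mul, h, k]; simp)⟩
    · exact ⟨b * c, a * d, Or.inr (by rw [Units.val_mul, h, k]; simp)⟩
    · exact ⟨a * c, b * d, Or.inr (by rw [Units.val_mul, h, k]; simp)⟩
    · exact ⟨b * c, a * d, Or.inl (by rw [Units.val_mul, h, k]; simp)⟩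
  | inv x _ hx =>
    obtain ⟨a, b, h⟩ := hx
    rcases h with h | h
    · refine ⟨Ring.inverse x.1.det * b, Ring.inverse x.1.det * a, Or.inl ?_⟩
      rw [Matrix.coe_units_inv, Matrix.inv_def, Matrix.adjugate_fin_two]
      simp [h]
    · refine ⟨-(Ring.inverse x.1.det * a), -(Ring.inverse x.1.det * b), Or.inr ?_⟩
      rw [Matrix.coe_units_inv, Matrix.inv_def, Matrix.adjugate_fin_two]
      simp [h]

/-- `C_ns⁺` is closed under products and inverses. -/
lemma closure_cnsPlusSet_subset {R : Type*} [CommRing R] {ε : R} {A : GL (Fin 2) R}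
    (hA : A ∈ Subgroup.closure (cnsPlusSet R ε)) : A ∈ cnsPlusSet R ε := by
  induction hA using Subgroup.closure_induction with
  | mem x hx => exact hx
  | one => exact ⟨1, 0, Or.inl (by simp [Matrix.one_fin_two])⟩
  | mul x y _ _ hx hy =>
    obtain ⟨a, b, h⟩ := hx
    obtain ⟨c, d, k⟩ := hy
    rcases h with h | h <;> rcases k with k | k
    · refine ⟨a * c + ε * b * d, b * c + a * d, Or.inl ?_⟩
      rw [Units.val_mul, h, k]
      ext i j; fin_cases i <;> fin_cases j <;> simp <;> ring
    · refine ⟨a * c - ε * b * d, a * d - b * c, Or.inr ?_⟩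
      rw [Units.val_mul, h, k]
      ext i j; fin_cases i <;> fin_cases j <;> simp <;> ring
    · refine ⟨a * c + ε * b * d, b * c + a * d, Or.inr ?_⟩
      rw [Units.val_mul, h, k]
      ext i j; fin_cases i <;> fin_cases j <;> simp <;> ring
    · refine ⟨a * c - ε * b * d, a * d - b * c, Or.inl ?_⟩
      rw [Units.val_mul, h, k]
      ext i j; fin_cases i <;> fin_cases j <;> simp <;> ring
  | inv x _ hx =>
    obtain ⟨a, b, h⟩ := hx
    rcases h with h | h
    · refine ⟨Ring.inverse x.1.det * a, -(Ring.inverse x.1.det * b), Or.inl ?_⟩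
      rw [Matrix.coe_units_inv, Matrix.inv_def, Matrix.adjugate_fin_two]
      ext i j; fin_cases i <;> fin_cases j <;> simp [h] <;> ring
    · refine ⟨-(Ring.inverse x.1.det * a), -(Ring.inverse x.1.det * b), Or.inr ?_⟩
      rw [Matrix.coe_units_inv, Matrix.inv_def, Matrix.adjugate_fin_two]
      ext i j; fin_cases i <;> fin_cases j <;> simp [h] <;> ring

lemma two_ne_zero_zmod (hp : Odd p) : (2 : ZMod p) ≠ 0 := by
  have : Fact (2 < p) := ⟨by
    have := (Fact.out : p.Prime).two_le
    obtain ⟨k, hk⟩ := hp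
    omega⟩
  intro h
  exact ZMod.neg_one_ne_one (n := p) (by linear_combination -h)

lemma V1_sup_V2sp_subset {n : ℕ} (hn : 1 ≤ n) :
    (↑(V1 p ⊔ V2sp p) : Set (Matrix (Fin 2) (Fin 2) (ZMod p))) ⊆
      glSet p n (Subgroup.closure (cspSet ℤ_[p])) := by
  intro M hM
  obtain ⟨x, y, rfl⟩ := (mem_sup_span_iff p).1 hM
  obtain ⟨X, rfl⟩ := ZMod.ringHom_surjective (PadicInt.toZMod (p := p)) x
  obtain ⟨Y, rfl⟩ := ZMod.ringHom_surjective (PadicInt.toZMod (p := p)) y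
  obtain ⟨A, hA⟩ := exists_gl_eq_one_add p hn !![X + Y, 0; 0, X - Y]
  refine ⟨A, Subgroup.subset_closure ⟨1 + (p : ℤ_[p]) ^ n * (X + Y),
    1 + (p : ℤ_[p]) ^ n * (X - Y), ?_⟩, _, hA, ?_⟩
  · rw [hA]
    ext i j; fin_cases i <;> fin_cases j <;> simp
  · ext i j; fin_cases i <;> fin_cases j <;> simp [sub_eq_add_neg]

lemma V1_sup_V2ns_subset {n : ℕ} (hn : 1 ≤ n) :
    (↑(V1 p ⊔ V2ns p) : Set (Matrix (Fin 2) (Fin 2) (ZMod p))) ⊆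
      glSet p n (Subgroup.closure (cnsSet ℤ_[p] (epsN p : ℤ_[p]))) := by
  intro M hM
  obtain ⟨x, y, rfl⟩ := (mem_sup_span_iff p).1 hM
  obtain ⟨X, rfl⟩ := ZMod.ringHom_surjective (PadicInt.toZMod (p := p)) x
  obtain ⟨Y, rfl⟩ := ZMod.ringHom_surjective (PadicInt.toZMod (p := p)) y
  obtain ⟨A, hA⟩ := exists_gl_eq_one_add p hn !![X, (epsN p : ℤ_[p]) * Y; Y, X]
  refine ⟨A, Subgroup.subset_closure ⟨1 + (p : ℤ_[p]) ^ n * X,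
    (p : ℤ_[p]) ^ n * Y, ?_⟩, _, hA, ?_⟩
  · rw [hA]
    ext i j; fin_cases i <;> fin_cases j <;> simp
    ring
  · ext i j; fin_cases i <;> fin_cases j <;> simp [mul_comm]

/-- The non-trivial coset of `C_sp` has zero diagonal, so it contains no matrix congruent to `1`
modulo `p`; the remaining matrices are diagonal, and diagonal matrices lie in `V₁ ⊕ V₂` because
`2` is invertible modulo `p`. -/
lemma glSet_cspPlusSet_subset (hp : Odd p) {n : ℕ} (hn : 1 ≤ n) :
    glSet p n (Subgroup.closure (cspPlusSet ℤ_[p])) ⊆ ↑(V1 p ⊔ V2sp p) := by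
  rintro M ⟨A, hA, B, hAB, rfl⟩
  have hpn : (p : ℤ_[p]) ^ n ≠ 0 := pow_ne_zero _ (by exact_mod_cast (Fact.out : p.Prime).ne_zero)
  have hp0 : PadicInt.toZMod ((p : ℤ_[p]) ^ n) = 0 := by
    rw [map_pow, map_natCast, ZMod.natCast_self, zero_pow (by omega)]
  have h2 := two_ne_zero_zmod p hp
  obtain ⟨a, b, h | h⟩ := closure_cspPlusSet_subset hA
  · rw [hAB] at h
    have h01 := congrFun (congrFun h 0) 1
    have h10 := congrFun (congrFun h 1) 0
    simp [hpn, (Fact.out : p.Prime).ne_zero] at h01 h10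
    refine (mem_sup_span_iff p).2 ⟨(PadicInt.toZMod (B 0 0) + PadicInt.toZMod (B 1 1)) / 2,
      (PadicInt.toZMod (B 0 0) - PadicInt.toZMod (B 1 1)) / 2, ?_⟩
    ext i j; fin_cases i <;> fin_cases j <;> simp [h01, h10] <;> field_simp <;> ring
  · rw [hAB] at h
    have h00 := congrArg (PadicInt.toZMod (p := p)) (congrFun (congrFun h 0) 0)
    simp only [Matrix.add_apply, Matrix.smul_apply, smul_eq_mul, map_add, map_mul, hp0] at h00
    simp at h00

/-- In the non-trivial coset of `C_ns` the diagonal entries are opposite, so a matrix congruent to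
`1` modulo `p` there would give `2 = 0` in `𝔽_p`. For the others, dividing the relations between the
entries of `1 + pⁿB` by `pⁿ` gives the same relations for `B`. -/
lemma glSet_cnsPlusSet_subset (hp : Odd p) {n : ℕ} (hn : 1 ≤ n) :
    glSet p n (Subgroup.closure (cnsPlusSet ℤ_[p] (epsN p : ℤ_[p]))) ⊆ ↑(V1 p ⊔ V2ns p) := by
  rintro M ⟨A, hA, B, hAB, rfl⟩
  have hpn : (p : ℤ_[p]) ^ n ≠ 0 := pow_ne_zero _ (by exact_mod_cast (Fact.out : p.Prime).ne_zero)
  have hp0 : PadicInt.toZMod ((p : ℤ_[p]) ^ n) = 0 := by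
    rw [map_pow, map_natCast, ZMod.natCast_self, zero_pow (by omega)]
  obtain ⟨a, b, h | h⟩ := closure_cnsPlusSet_subset hA
  · rw [hAB] at h
    have h00 := congrFun (congrFun h 0) 0
    have h01 := congrFun (congrFun h 0) 1
    have h10 := congrFun (congrFun h 1) 0
    have h11 := congrFun (congrFun h 1) 1
    simp at h00 h01 h10 h11
    have e1 : B 1 1 = B 0 0 := mul_left_cancel₀ hpn (by linear_combination h11 - h00)
    have e2 : B 0 1 = (epsN p : ℤ_[p]) * B 1 0 :=
      mul_left_cancel₀ hpn (by linear_combination h01 - (epsN p : ℤ_[p]) * h10)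
    refine (mem_sup_span_iff p).2 ⟨PadicInt.toZMod (B 0 0), PadicInt.toZMod (B 1 0), ?_⟩
    ext i j; fin_cases i <;> fin_cases j <;> simp [e1, e2, mul_comm]
  · rw [hAB] at h
    have h00 := congrArg (PadicInt.toZMod (p := p)) (congrFun (congrFun h 0) 0)
    have h11 := congrArg (PadicInt.toZMod (p := p)) (congrFun (congrFun h 1) 1)
    simp only [Matrix.add_apply, Matrix.smul_apply, smul_eq_mul, map_add, map_mul, hp0] at h00 h11
    simp at h00 h11
    exact absurd (by linear_combination h00 + h11) (two_ne_zero_zmod p hp)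

/-- **(Remark 3.6.)** For an odd prime `p`, if `C` is a (split or non-split) Cartan
subgroup of `GL₂(ℤ_p)` and `G` is either `C` or its normaliser `C⁺`, then for every
`n ≥ 1` one has `𝔤ₙ = V₁ ⊕ V₂` (with `V₁, V₂` taken in the matching split or
non-split case). -/
theorem glSet_cartan_eq_V1_sup_V2
    (p : ℕ) [Fact p.Prime] (hp : Odd p)
    (S : Set (GL (Fin 2) ℤ_[p]))
    (V2 : Submodule (ZMod p) (Matrix (Fin 2) (Fin 2) (ZMod p)))
    (hS : ((S = cspSet ℤ_[p] ∨ S = cspPlusSet ℤ_[p]) ∧ V2 = V2sp p) ∨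
          ((S = cnsSet ℤ_[p] ((epsN p : ℤ_[p])) ∨ S = cnsPlusSet ℤ_[p] ((epsN p : ℤ_[p]))) ∧
            V2 = V2ns p))
    (n : ℕ) (hn : 1 ≤ n) :
    glSet p n (Subgroup.closure S) = ↑(V1 p ⊔ V2) := by
  have hsp : cspSet ℤ_[p] ⊆ cspPlusSet ℤ_[p] := fun _ ⟨a, b, h⟩ => ⟨a, b, Or.inl h⟩
  have hns : cnsSet ℤ_[p] (epsN p : ℤ_[p]) ⊆ cnsPlusSet ℤ_[p] (epsN p : ℤ_[p]) :=
    fun _ ⟨a, b, h⟩ => ⟨a, b, Or.inl h⟩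
  have msp := glSet_mono p (n := n) (Subgroup.closure_mono hsp)
  have mns := glSet_mono p (n := n) (Subgroup.closure_mono hns)
  have lsp := V1_sup_V2sp_subset p hn
  have lns := V1_sup_V2ns_subset p hn
  have usp := glSet_cspPlusSet_subset p hp hn
  have uns := glSet_cnsPlusSet_subset p hp hn
  rcases hS with ⟨rfl | rfl, rfl⟩ | ⟨rfl | rfl, rfl⟩
  · exact (msp.trans usp).antisymm lsp
  · exact usp.antisymm (lsp.trans msp)
  · exact (mns.trans uns).antisymm lns
  · exact uns.antisymm (lns.trans mns)

end
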